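/- Let m∈ℕ, m≥1. There exists a constant C>0 depending only on m such that for all f,g ∈ C₀^∞(ℝ³;ℝ³), ‖ ∇^m((f·∇)g) − (f·∇)(∇^m g) ‖_{L²(ℝ³)} ≤ C ( ‖∇f‖_{L^∞(ℝ³)} ‖∇^m g‖_{L²(ℝ³)} + ‖∇g‖_{L^∞(ℝ³)} ‖∇^m f‖_{L²(ℝ³)} ). -/

import Mathlib

open MeasureTheory Set ENNReal

noncomputable section

abbrev E3 : Type := EuclideanSpace ℝ (Fin 3)

/-- The convection term `(f·∇)g`, i.e. the derivative of `g` in direction `f(x)`. -/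
def conv (f g : E3 → E3) (x : E3) : E3 := fderiv ℝ g x (f x)

/-- The commutator `[∇^m, f·∇]g = ∇^m((f·∇)g) − (f·∇)(∇^m g)`. -/
def commGrad (m : ℕ) (f g : E3 → E3) (x : E3) :
    ContinuousMultilinearMap ℝ (fun _ : Fin m => E3) E3 :=
  iteratedFDeriv ℝ m (conv f g) x - fderiv ℝ (iteratedFDeriv ℝ m g) x (f x)

/-- Directional derivatives commute with iterated derivatives. -/
theorem iteratedFDeriv_fderiv_apply_const {E F : Type*} [NormedAddCommGroup E] [NormedSpace ℝ E]
    [NormedAddCommGroup F] [NormedSpace ℝ F] {g : E → F} (hg : ContDiff ℝ (⊤ : ℕ∞) g) (v : E)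
    (m : ℕ) :
    iteratedFDeriv ℝ m (fun x => fderiv ℝ g x v) =
      fun x => fderiv ℝ (iteratedFDeriv ℝ m g) x v := by
  induction m with
  | zero =>
    ext x w
    simp only [iteratedFDeriv_zero_eq_comp, LinearIsometryEquiv.comp_fderiv]
    simp
  | succ m ih =>
    ext x w
    have hG : ContDiff ℝ (⊤ : ℕ∞) (iteratedFDeriv ℝ m g) :=
      hg.iteratedFDeriv_right (m := (⊤ : ℕ∞)) (by exact_mod_cast le_top)
    have hG' : DifferentiableAt ℝ (fderiv ℝ (iteratedFDeriv ℝ m g)) x :=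
      ((hG.fderiv_right (m := (⊤ : ℕ∞)) (by simp)).differentiable (by simp)) x
    have hsymm : IsSymmSndFDerivAt ℝ (iteratedFDeriv ℝ m g) x :=
      hG.contDiffAt.isSymmSndFDerivAt
        (by rw [minSmoothness_of_isRCLikeNormedField]; exact WithTop.coe_le_coe.2 le_top)
    have hH : DifferentiableAt ℝ (iteratedFDeriv ℝ (m + 1) g) x :=
      (hg.iteratedFDeriv_right (m := (⊤ : ℕ∞)) (by exact_mod_cast le_top)).differentiable
        (by simp) x
    have hGw : DifferentiableAt ℝ (fun y => fderiv ℝ (iteratedFDeriv ℝ m g) y (w 0)) x :=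
      hG'.clm_apply (differentiableAt_const _)
    rw [iteratedFDeriv_succ_apply_left, ih, ← fderiv_continuousMultilinear_apply_const_apply hH]
    simp only [iteratedFDeriv_succ_apply_left]
    rw [fderiv_continuousMultilinear_apply_const_apply hGw,
      fderiv_clm_apply hG' (differentiableAt_const v),
      fderiv_clm_apply hG' (differentiableAt_const (w 0))]
    simp [hsymm.eq v]

theorem norm_commGrad_le (m : ℕ) {f g : E3 → E3} (hf : ContDiff ℝ (⊤ : ℕ∞) f)
    (hg : ContDiff ℝ (⊤ : ℕ∞) g) (x : E3) :
    ‖commGrad m f g x‖ ≤ ∑ k ∈ Finset.range m, (m.choose (k + 1) : ℝ) *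
      (‖iteratedFDeriv ℝ (k + 1) f x‖ * ‖iteratedFDeriv ℝ (m - 1 - k + 1) g x‖) := by
  have hg' : ContDiff ℝ (⊤ : ℕ∞) (fderiv ℝ g) := hg.fderiv_right (by simp)
  have hm : ((m : ℕ) : WithTop ℕ∞) ≤ ((⊤ : ℕ∞) : WithTop ℕ∞) := by exact_mod_cast le_top
  have hsub : ContDiff ℝ (⊤ : ℕ∞) (fun y => f y - f x) := hf.sub contDiff_const
  have hsplit : conv f g = (fun y => fderiv ℝ g y (f x)) +
      fun y => ContinuousLinearMap.apply ℝ E3 (f y - f x) (fderiv ℝ g y) := by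
    ext1 y; simp [conv]
  have heq : commGrad m f g x = iteratedFDeriv ℝ m
      (fun y => ContinuousLinearMap.apply ℝ E3 (f y - f x) (fderiv ℝ g y)) x := by
    rw [commGrad, hsplit, iteratedFDeriv_add_apply, iteratedFDeriv_fderiv_apply_const hg,
      add_sub_cancel_left]
    · exact ((hg'.clm_apply contDiff_const).of_le hm).contDiffAt
    · exact ((hg'.clm_apply hsub).of_le hm).contDiffAt
  have hB : ‖ContinuousLinearMap.apply ℝ E3 (E := E3)‖ ≤ 1 := by
    refine ContinuousLinearMap.opNorm_le_bound _ zero_le_one fun y => ?_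
    refine ContinuousLinearMap.opNorm_le_bound _ (by positivity) fun T => ?_
    simpa [mul_comm] using T.le_opNorm y
  rw [heq]
  refine ((ContinuousLinearMap.apply ℝ E3 (E := E3)).norm_iteratedFDeriv_le_of_bilinear_of_le_one
    hsub hg' x hm hB).trans ?_
  rw [Finset.sum_range_succ']
  simp only [norm_iteratedFDeriv_zero, sub_self, norm_zero, mul_zero, zero_mul, add_zero]
  refine Finset.sum_le_sum fun k _ => le_of_eq ?_
  have hk : iteratedFDeriv ℝ (k + 1) (fun y => f y - f x) x = iteratedFDeriv ℝ (k + 1) f x := by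
    rw [show (fun y => f y - f x) = f - fun _ => f x from rfl, iteratedFDeriv_sub_apply
      (hf.of_le (by exact_mod_cast le_top)).contDiffAt contDiff_const.contDiffAt]
    simp [iteratedFDeriv_const_of_ne]
  rw [hk, norm_iteratedFDeriv_fderiv, mul_assoc, Nat.sub_sub, add_comm 1 k]

theorem le_max_endpoints_of_sq_le_mul {n : ℕ} {d : ℕ → ℝ} (hd : ∀ j ≤ n, 0 ≤ d j)
    (h : ∀ j, j + 2 ≤ n → d (j + 1) ^ 2 ≤ d j * d (j + 2)) {j : ℕ} (hj : j ≤ n) :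
    d j ≤ max (d 0) (d n) := by
  obtain ⟨b, hb, hbmax⟩ := Finset.exists_max_image (Finset.range (n + 1)) d ⟨0, by simp⟩
  have hex : ∃ i, i ≤ n ∧ ∀ k ≤ n, d k ≤ d i :=
    ⟨b, by simpa [Nat.lt_succ_iff] using hb,
      fun k hk => hbmax k (by simpa [Nat.lt_succ_iff] using hk)⟩
  classical
  obtain ⟨hi, hmax⟩ := Nat.find_spec hex
  have hmin := fun {k : ℕ} => Nat.find_min hex (m := k)
  generalize Nat.find hex = i at hi hmax hmin
  refine (hmax j hj).trans ?_
  rcases i with _ | i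
  · exact le_max_left _ _
  rcases hi.eq_or_lt with rfl | hlt
  · exact le_max_right _ _
  exfalso
  refine hmin (Nat.lt_succ_self i) ⟨by omega, fun k hk => (hmax k hk).trans ?_⟩
  have h1 := h i (by omega)
  have h2 := hmax (i + 2) (by omega)
  have h3 := hd i (by omega)
  by_contra! hc
  nlinarith

/-- Approximate log-convexity bounds a sequence by its end values. -/
theorem exists_le_mul_add_of_sq_le_mul (n : ℕ) {K : ℝ} (hK : 0 < K) :
    ∃ C : ℝ, 0 < C ∧ ∀ c : ℕ → ℝ, (∀ j ≤ n, 0 ≤ c j) →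
      (∀ j, j + 2 ≤ n → c (j + 1) ^ 2 ≤ K ^ 2 * (c j * c (j + 2))) →
      ∀ j ≤ n, c j ≤ C * (c 0 + c n) := by
  have hpos : ∀ j, 0 < K ^ (j * (n - j)) := fun j => by positivity
  refine ⟨∑ j ∈ Finset.range (n + 1), K ^ (j * (n - j)),
    Finset.sum_pos (fun j _ => hpos j) ⟨0, by simp⟩, fun c hc h j hj => ?_⟩
  have key := le_max_endpoints_of_sq_le_mul (n := n) (d := fun j => c j / K ^ (j * (n - j)))
    (fun j hj => div_nonneg (hc j hj) (hpos j).le) (fun j hj => ?_) hj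
  · have hle : c j ≤ K ^ (j * (n - j)) * (c 0 + c n) := by
      rw [div_le_iff₀ (hpos j)] at key
      have h0 := hc 0 (by omega)
      have h1 := hc n le_rfl
      refine key.trans ?_
      rw [mul_comm]
      gcongr
      simp [h0, h1]
    refine hle.trans (mul_le_mul_of_nonneg_right ?_ (add_nonneg (hc 0 (by omega)) (hc n le_rfl)))
    exact Finset.single_le_sum (f := fun j => K ^ (j * (n - j))) (fun j _ => (hpos j).le)
      (by simpa [Nat.lt_succ_iff] using hj)
  · obtain ⟨r, rfl⟩ := Nat.exists_eq_add_of_le hj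
    have hx : (j + 2 + r) - (j + 1) = r + 1 := by omega
    have hy : (j + 2 + r) - (j + 2) = r := by omega
    have hz : (j + 2 + r) - j = r + 2 := by omega
    have hpow : (K ^ ((j + 1) * (r + 1))) ^ 2 =
        K ^ 2 * (K ^ (j * (r + 2)) * K ^ ((j + 2) * r)) := by
      rw [← pow_mul, ← pow_add, ← pow_add]; congr 1; ring
    simp only [hx, hy, hz]
    rw [div_pow, div_mul_div_comm, hpow, ← div_div]
    gcongr
    rw [div_le_iff₀ (by positivity), mul_comm]
    exact h j hj

theorem norm_le_sum_norm_apply_single {k : ℕ}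
    (T : ContinuousMultilinearMap ℝ (fun _ : Fin k => E3) E3) :
    ‖T‖ ≤ ∑ s : (Fin k → Fin 3) × Fin 3,
      ‖T (fun i => EuclideanSpace.single (s.1 i) 1) s.2‖ := by
  have hy : ∀ y : E3, ‖y‖ ≤ ∑ c, ‖y c‖ := fun y => by
    conv_lhs => rw [← (EuclideanSpace.basisFun (Fin 3) ℝ).sum_repr y]
    refine (norm_sum_le _ _).trans (Finset.sum_le_sum fun c _ => ?_)
    simp [norm_smul]
  refine ContinuousMultilinearMap.opNorm_le_bound (by positivity) fun w => ?_
  have hw : w = fun i => ∑ c, w i c • (EuclideanSpace.single c 1 : E3) := by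
    ext1 i
    conv_lhs => rw [← (EuclideanSpace.basisFun (Fin 3) ℝ).sum_repr (w i)]
    simp
  conv_lhs => rw [hw, ContinuousMultilinearMap.map_sum]
  rw [Fintype.sum_prod_type, Finset.sum_mul]
  refine (norm_sum_le _ _).trans (Finset.sum_le_sum fun a _ => ?_)
  rw [ContinuousMultilinearMap.map_smul_univ, norm_smul, mul_comm, norm_prod]
  gcongr with i
  · exact hy _
  · exact PiLp.norm_apply_le _ _

theorem hasDerivAt_abs_rpow_mul_self {p : ℝ} (hp : 0 < p) (t : ℝ) :
    HasDerivAt (fun t : ℝ => |t| ^ p * t) ((p + 1) * |t| ^ p) t := by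
  rcases eq_or_ne t 0 with rfl | ht
  · rw [hasDerivAt_iff_tendsto_slope_zero]
    have : Filter.Tendsto (fun t : ℝ => |t| ^ p) (nhdsWithin 0 {0}ᶜ) (nhds (|0| ^ p)) :=
      ((continuous_abs.rpow_const fun _ => Or.inr hp.le).tendsto 0).mono_left inf_le_left
    rw [abs_zero, Real.zero_rpow hp.ne'] at this ⊢
    simp only [mul_zero]
    refine this.congr' ?_
    filter_upwards [self_mem_nhdsWithin] with t ht
    have : t ≠ 0 := ht
    simp
    field_simp
  · have h := ((hasDerivAt_abs ht).rpow_const (p := p) (Or.inl (abs_ne_zero.2 ht))).mul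
      (hasDerivAt_id t)
    refine h.congr_deriv ?_
    have h1 : |t| ^ p = |t| ^ (p - 1) * |t| := by
      rw [Real.rpow_sub_one (abs_ne_zero.2 ht)]; field_simp
    have h2 : (SignType.sign t : ℝ) * t = |t| := by simp [sign_mul_self]
    simp only [id, mul_one]
    rw [h1]
    linear_combination p * |t| ^ (p - 1) * h2

section Interpolation

variable {E : Type*} [NormedAddCommGroup E] [NormedSpace ℝ E] [FiniteDimensional ℝ E]
  [MeasurableSpace E] [BorelSpace E] {μ : Measure E} [μ.IsAddHaarMeasure]

theorem lintegral_enorm_fderiv_rpow_le {v : E → ℝ} (hv : ContDiff ℝ (⊤ : ℕ∞) v)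
    (hvc : HasCompactSupport v) (e : E) {p : ℝ} (hp : 0 < p) :
    ∫⁻ x, ‖fderiv ℝ v x e‖ₑ ^ (p + 2) ∂μ ≤ ENNReal.ofReal (p + 1) *
      eLpNorm (fun x => (v x * fderiv ℝ (fun y => fderiv ℝ v y e) x e) *
        ‖fderiv ℝ v x e‖ ^ p) 1 μ := by
  set w : E → ℝ := fun x => fderiv ℝ v x e with hw
  have hwd : ContDiff ℝ (⊤ : ℕ∞) w := (hv.fderiv_right (by simp)).clm_apply contDiff_const
  have hzd : ContDiff ℝ (⊤ : ℕ∞) (fun x => fderiv ℝ w x e) :=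
    (hwd.fderiv_right (by simp)).clm_apply contDiff_const
  have hwc : HasCompactSupport w := hvc.fderiv_apply (𝕜 := ℝ) e
  have hpow : Continuous fun x => |w x| ^ p :=
    hwd.continuous.abs.rpow_const fun _ => Or.inr hp.le
  set φ : E → ℝ := fun x => |w x| ^ p * w x with hφ
  have hφd : ∀ x, HasFDerivAt φ (((p + 1) * |w x| ^ p) • fderiv ℝ w x) x := fun x =>
    (hasDerivAt_abs_rpow_mul_self hp (w x)).comp_hasFDerivAt x
      (hwd.differentiable (by simp) x).hasFDerivAt
  have hφ' : ∀ x, fderiv ℝ φ x e = (p + 1) * |w x| ^ p * fderiv ℝ w x e := fun x => by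
    rw [(hφd x).fderiv]; simp
  have hφc : Continuous φ := hpow.mul hwd.continuous
  have hi1 : Integrable (fun x => fderiv ℝ φ x e * v x) μ := by
    simp only [hφ']
    exact ((((continuous_const.mul hpow).mul hzd.continuous)).mul
      hv.continuous).integrable_of_hasCompactSupport hvc.mul_left
  have hi2 : Integrable (fun x => φ x * fderiv ℝ v x e) μ :=
    (hφc.mul hwd.continuous).integrable_of_hasCompactSupport hwc.mul_left
  have hi3 : Integrable (fun x => φ x * v x) μ :=
    (hφc.mul hv.continuous).integrable_of_hasCompactSupport hvc.mul_left
  have hibp := integral_mul_fderiv_eq_neg_fderiv_mul_of_integrable hi1 hi2 hi3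
    (fun x _ => (hφd x).differentiableAt) (fun x _ => hv.differentiable (by simp) x)
  have hpt : ∀ x, φ x * fderiv ℝ v x e = |w x| ^ (p + 2) := fun x => by
    change |w x| ^ p * w x * w x = _
    rw [Real.rpow_add_of_nonneg (abs_nonneg _) hp.le zero_le_two, Real.rpow_two, sq_abs]
    ring
  simp only [hpt] at hibp hi2
  calc ∫⁻ x, ‖w x‖ₑ ^ (p + 2) ∂μ = ∫⁻ x, ENNReal.ofReal (|w x| ^ (p + 2)) ∂μ := by
        refine lintegral_congr fun x => ?_
        rw [← ENNReal.ofReal_rpow_of_nonneg (abs_nonneg _) (by positivity),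
          ← Real.norm_eq_abs, ofReal_norm]
    _ = ENNReal.ofReal (∫ x, |w x| ^ (p + 2) ∂μ) :=
        (ofReal_integral_eq_lintegral_ofReal hi2 (.of_forall fun x => by positivity)).symm
    _ ≤ ‖∫ x, fderiv ℝ φ x e * v x ∂μ‖ₑ := by
        rw [hibp, ← ofReal_norm]
        exact ENNReal.ofReal_le_ofReal (neg_le_abs _)
    _ ≤ ∫⁻ x, ‖fderiv ℝ φ x e * v x‖ₑ ∂μ := enorm_integral_le_lintegral_enorm _
    _ = _ := by
        rw [eLpNorm_one_eq_lintegral_enorm, ← lintegral_const_mul' _ _ ENNReal.ofReal_ne_top]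
        refine lintegral_congr fun x => ?_
        rw [← ofReal_norm, ← ofReal_norm, ← ENNReal.ofReal_mul (by positivity), hφ']
        simp only [norm_mul, Real.norm_eq_abs, abs_abs, Real.abs_rpow_of_nonneg (abs_nonneg _),
          abs_of_pos (by positivity : 0 < p + 1)]
        change ENNReal.ofReal _ = ENNReal.ofReal ((p + 1) * (_ * |w x| ^ p))
        ring_nf

/-- The basic interpolation step: `‖∂v‖_s² ≤ (s - 1) ‖v‖_q ‖∂²v‖_r` if `2/s = 1/q + 1/r`, where
`s = p + 2`. -/
theorem eLpNorm_fderiv_apply_sq_le {v : E → ℝ} (hv : ContDiff ℝ (⊤ : ℕ∞) v)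
    (hvc : HasCompactSupport v) (e : E) {p : ℝ} (hp : 0 < p) {q r : ℝ≥0∞}
    [HolderTriple q r (ENNReal.ofReal ((p + 2) / 2))] :
    eLpNorm (fun x => fderiv ℝ v x e) (ENNReal.ofReal (p + 2)) μ ^ 2 ≤
      ENNReal.ofReal (p + 1) * (eLpNorm v q μ *
        eLpNorm (fun x => fderiv ℝ (fun y => fderiv ℝ v y e) x e) r μ) := by
  have h := lintegral_enorm_fderiv_rpow_le (μ := μ) hv hvc e hp
  set w : E → ℝ := fun x => fderiv ℝ v x e with hw
  have hwd : ContDiff ℝ (⊤ : ℕ∞) w := (hv.fderiv_right (by simp)).clm_apply contDiff_const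
  have hzd : ContDiff ℝ (⊤ : ℕ∞) (fun x => fderiv ℝ w x e) :=
    (hwd.fderiv_right (by simp)).clm_apply contDiff_const
  have hwc : HasCompactSupport w := hvc.fderiv_apply (𝕜 := ℝ) e
  have hpow : Continuous fun x => ‖w x‖ ^ p :=
    hwd.continuous.norm.rpow_const fun _ => Or.inr hp.le
  set z : E → ℝ := fun x => fderiv ℝ w x e with hz
  set X := eLpNorm w (ENNReal.ofReal (p + 2)) μ with hX
  have hXtop : X ≠ ∞ := (hwd.continuous.memLp_of_hasCompactSupport hwc).eLpNorm_lt_top.ne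
  have hXpow : X ^ (p + 2) = ∫⁻ x, ‖w x‖ₑ ^ (p + 2) ∂μ := by
    rw [hX, eLpNorm_eq_lintegral_rpow_enorm_toReal (by simp; linarith) ENNReal.ofReal_ne_top,
      ENNReal.toReal_ofReal (by positivity), ← ENNReal.rpow_mul, one_div,
      inv_mul_cancel₀ (by positivity), ENNReal.rpow_one]
  have : HolderTriple (ENNReal.ofReal ((p + 2) / 2)) (ENNReal.ofReal ((p + 2) / p)) 1 := by
    constructor
    rw [← ENNReal.ofReal_inv_of_pos (by positivity), ← ENNReal.ofReal_inv_of_pos (by positivity),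
      ← ENNReal.ofReal_add (by positivity) (by positivity), inv_one, ← ENNReal.ofReal_one]
    congr 1
    field_simp
    ring
  have hH1 : eLpNorm (fun x => v x * z x) (ENNReal.ofReal ((p + 2) / 2)) μ ≤
      eLpNorm v q μ * eLpNorm z r μ := by
    have h1 := eLpNorm_smul_le_mul_eLpNorm (μ := μ) (p := q) (q := r)
      (r := ENNReal.ofReal ((p + 2) / 2)) hzd.continuous.aestronglyMeasurable
      hv.continuous.aestronglyMeasurable
    exact h1
  have hH2 : eLpNorm (fun x => (v x * z x) * ‖w x‖ ^ p) 1 μ ≤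
      eLpNorm v q μ * eLpNorm z r μ * X ^ p := by
    have h2 := eLpNorm_smul_le_mul_eLpNorm (μ := μ) (p := ENNReal.ofReal ((p + 2) / 2))
      (q := ENNReal.ofReal ((p + 2) / p)) (r := 1) hpow.aestronglyMeasurable
      (hv.continuous.mul hzd.continuous).aestronglyMeasurable
    rw [eLpNorm_norm_rpow _ hp, ← ENNReal.ofReal_mul (by positivity),
      div_mul_cancel₀ _ hp.ne'] at h2
    exact h2.trans (mul_le_mul_left hH1 _)
  rcases eq_or_ne X 0 with h0 | h0
  · simp [h0]
  have hfin : X ^ 2 * X ^ p ≤ ENNReal.ofReal (p + 1) * (eLpNorm v q μ * eLpNorm z r μ) * X ^ p := by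
    rw [← ENNReal.rpow_two, ← ENNReal.rpow_add _ _ h0 hXtop, add_comm, hXpow, mul_assoc]
    exact h.trans (mul_le_mul_right hH2 _)
  have hXp0 : X ^ p ≠ 0 := by simp [h0, hXtop]
  have hXpt : X ^ p ≠ ∞ := ENNReal.rpow_ne_top_of_nonneg hp.le hXtop
  exact (ENNReal.mul_le_mul_iff_left hXp0 hXpt).1 hfin

end Interpolation

theorem fderiv_iteratedFDeriv_apply_coord {f : E3 → E3} (hf : ContDiff ℝ (⊤ : ℕ∞) f) {k : ℕ}
    (w : Fin k → E3) (c : Fin 3) (x y : E3) :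
    fderiv ℝ (fun z => iteratedFDeriv ℝ k f z w c) x y =
      iteratedFDeriv ℝ (k + 1) f x (Fin.cons y w) c := by
  have hd : DifferentiableAt ℝ (iteratedFDeriv ℝ k f) x :=
    (hf.iteratedFDeriv_right (m := (⊤ : ℕ∞)) (by exact_mod_cast le_top)).differentiable (by simp) x
  have h := ((EuclideanSpace.proj c : E3 →L[ℝ] ℝ).comp
    (ContinuousMultilinearMap.apply ℝ (fun _ : Fin k => E3) E3 w)).hasFDerivAt.comp x
      hd.hasFDerivAt
  have h' : HasFDerivAt (fun z => iteratedFDeriv ℝ k f z w c) _ x := h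
  rw [h'.fderiv, iteratedFDeriv_succ_apply_left]
  simp

theorem norm_apply_coord_le {k : ℕ} (T : ContinuousMultilinearMap ℝ (fun _ : Fin k => E3) E3)
    {w : Fin k → E3} (hw : ∀ i, ‖w i‖ ≤ 1) (c : Fin 3) : ‖T w c‖ ≤ ‖T‖ :=
  (PiLp.norm_apply_le _ _).trans <| by
    simpa using T.le_opNorm_mul_prod_of_le hw

/-- The interpolation step for the full tensor of derivatives. -/
theorem eLpNorm_iteratedFDeriv_sq_le {f : E3 → E3} (hf : ContDiff ℝ (⊤ : ℕ∞) f)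
    (hfc : HasCompactSupport f) (k : ℕ) {p : ℝ} (hp : 0 < p) {q r : ℝ≥0∞}
    [HolderTriple q r (ENNReal.ofReal ((p + 2) / 2))] :
    eLpNorm (iteratedFDeriv ℝ (k + 1) f) (ENNReal.ofReal (p + 2)) volume ^ 2 ≤
      ENNReal.ofReal ((Fintype.card ((Fin (k + 1) → Fin 3) × Fin 3) : ℝ) ^ 2 * (p + 1)) *
        (eLpNorm (iteratedFDeriv ℝ k f) q volume *
          eLpNorm (iteratedFDeriv ℝ (k + 2) f) r volume) := by
  set B := ENNReal.ofReal (p + 1) * (eLpNorm (iteratedFDeriv ℝ k f) q volume *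
    eLpNorm (iteratedFDeriv ℝ (k + 2) f) r volume) with hB
  have hcoord : ∀ (l : ℕ) (w : Fin l → E3) (c : Fin 3),
      ContDiff ℝ (⊤ : ℕ∞) (fun x => iteratedFDeriv ℝ l f x w c) := fun l w c =>
    ((EuclideanSpace.proj c : E3 →L[ℝ] ℝ).comp
      (ContinuousMultilinearMap.apply ℝ (fun _ : Fin l => E3) E3 w)).contDiff.comp
      (hf.iteratedFDeriv_right (m := (⊤ : ℕ∞)) (by exact_mod_cast le_top))
  have hcomp : ∀ s : (Fin (k + 1) → Fin 3) × Fin 3,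
      eLpNorm (fun x => iteratedFDeriv ℝ (k + 1) f x
        (fun i => EuclideanSpace.single (s.1 i) 1) s.2) (ENNReal.ofReal (p + 2)) volume ≤
      B ^ (2⁻¹ : ℝ) := by
    rintro ⟨a, c⟩
    have hone : ∀ i : Fin 3, ‖(EuclideanSpace.single i 1 : E3)‖ ≤ 1 := fun i => by simp
    set w : Fin k → E3 := fun i => EuclideanSpace.single (a i.succ) 1 with hw
    set e : E3 := EuclideanSpace.single (a 0) 1 with he
    have hcons : (fun i => EuclideanSpace.single (a i) 1 : Fin (k + 1) → E3) = Fin.cons e w := by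
      ext1 i
      refine Fin.cases ?_ (fun i => ?_) i <;> simp [he, hw]
    have hsupp : HasCompactSupport (fun x => iteratedFDeriv ℝ k f x w c) :=
      (hfc.iteratedFDeriv (𝕜 := ℝ) k).comp_left
        (g := fun T : ContinuousMultilinearMap ℝ (fun _ : Fin k => E3) E3 => T w c) (by simp)
    have h := eLpNorm_fderiv_apply_sq_le (μ := volume) (hcoord k w c) hsupp e hp (q := q) (r := r)
    simp only [fderiv_iteratedFDeriv_apply_coord hf] at h
    rw [ENNReal.le_rpow_inv_iff two_pos, ENNReal.rpow_two]
    dsimp only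
    rw [hcons]
    refine h.trans ?_
    rw [hB]
    gcongr
    · exact eLpNorm_mono fun x => norm_apply_coord_le _ (fun i => hone _) _
    · refine eLpNorm_mono fun x => norm_apply_coord_le _ (fun i => ?_) _
      refine Fin.cases ?_ (fun i => Fin.cases ?_ (fun i => ?_) i) i <;> simp [he, hw]
  have hp1 : (1 : ℝ≥0∞) ≤ ENNReal.ofReal (p + 2) := by
    rw [← ENNReal.ofReal_one]; exact ENNReal.ofReal_le_ofReal (by linarith)
  have hsum : eLpNorm (iteratedFDeriv ℝ (k + 1) f) (ENNReal.ofReal (p + 2)) volume ≤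
      (Fintype.card ((Fin (k + 1) → Fin 3) × Fin 3) : ℝ≥0∞) * B ^ (2⁻¹ : ℝ) := by
    calc _ ≤ eLpNorm (∑ s : (Fin (k + 1) → Fin 3) × Fin 3, fun x => ‖iteratedFDeriv ℝ (k + 1) f x
          (fun i => EuclideanSpace.single (s.1 i) 1) s.2‖) (ENNReal.ofReal (p + 2)) volume := by
          refine eLpNorm_mono_real fun x => ?_
          simpa only [Finset.sum_apply] using norm_le_sum_norm_apply_single _
      _ ≤ ∑ s : (Fin (k + 1) → Fin 3) × Fin 3, eLpNorm (fun x => ‖iteratedFDeriv ℝ (k + 1) f x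
          (fun i => EuclideanSpace.single (s.1 i) 1) s.2‖) (ENNReal.ofReal (p + 2)) volume :=
          eLpNorm_sum_le (fun s _ => (hcoord _ _ _).continuous.norm.aestronglyMeasurable) hp1
      _ ≤ ∑ _s : (Fin (k + 1) → Fin 3) × Fin 3, B ^ (2⁻¹ : ℝ) :=
          Finset.sum_le_sum fun s _ => by rw [eLpNorm_norm]; exact hcomp s
      _ = _ := by rw [Finset.sum_const, Finset.card_univ, nsmul_eq_mul]
  calc _ ≤ ((Fintype.card ((Fin (k + 1) → Fin 3) × Fin 3) : ℝ≥0∞) * B ^ (2⁻¹ : ℝ)) ^ 2 := by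
        gcongr
    _ = _ := by
        rw [mul_pow, ← ENNReal.rpow_two (B ^ _), ← ENNReal.rpow_mul,
          inv_mul_cancel₀ two_ne_zero, ENNReal.rpow_one, hB, ENNReal.ofReal_mul (by positivity),
          ENNReal.ofReal_pow (by positivity), ENNReal.ofReal_natCast, mul_assoc]

/-- The interpolation exponent `2n/j`, equal to `∞` for `j = 0`. -/
def interpExponent (n j : ℕ) : ℝ≥0∞ := (ENNReal.ofReal (j / (2 * n)))⁻¹

theorem interpExponent_zero (n : ℕ) : interpExponent n 0 = ∞ := by simp [interpExponent]

theorem interpExponent_self {n : ℕ} (hn : n ≠ 0) : interpExponent n n = 2 := by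
  have hn' : (n : ℝ) ≠ 0 := by exact_mod_cast hn
  rw [interpExponent, show (n : ℝ) / (2 * n) = 2⁻¹ by field_simp,
    ENNReal.ofReal_inv_of_pos two_pos, inv_inv]
  simp

theorem holderTriple_interpExponent {n j : ℕ} (hn : n ≠ 0) (hj : j ≤ n) :
    HolderTriple (interpExponent n j) (interpExponent n (n - j)) 2 := by
  have hn' : (n : ℝ) ≠ 0 := by exact_mod_cast hn
  constructor
  rw [← interpExponent_self hn]
  simp only [interpExponent, inv_inv]
  rw [← ENNReal.ofReal_add (by positivity) (by positivity), Nat.cast_sub hj]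
  congr 1
  field_simp
  ring

/-- The norms `‖∇^{j+1} f‖_{2n/j}`, which interpolate between `‖∇f‖_∞` and `‖∇^{n+1} f‖_2`. -/
def interpNorm (n : ℕ) (f : E3 → E3) (j : ℕ) : ℝ :=
  (eLpNorm (iteratedFDeriv ℝ (j + 1) f) (interpExponent n j) volume).toReal

theorem memLp_iteratedFDeriv {f : E3 → E3} (hf : ContDiff ℝ (⊤ : ℕ∞) f)
    (hfc : HasCompactSupport f) (k : ℕ) (p : ℝ≥0∞) : MemLp (iteratedFDeriv ℝ k f) p volume :=
  (hf.continuous_iteratedFDeriv (by exact_mod_cast le_top)).memLp_of_hasCompactSupport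
    (hfc.iteratedFDeriv k)

theorem ofReal_interpNorm {f : E3 → E3} (hf : ContDiff ℝ (⊤ : ℕ∞) f)
    (hfc : HasCompactSupport f) (n j : ℕ) : ENNReal.ofReal (interpNorm n f j) =
      eLpNorm (iteratedFDeriv ℝ (j + 1) f) (interpExponent n j) volume :=
  ENNReal.ofReal_toReal (memLp_iteratedFDeriv hf hfc _ _).eLpNorm_lt_top.ne

theorem exists_interpNorm_sq_le (n : ℕ) :
    ∃ K : ℝ, 0 < K ∧ ∀ f : E3 → E3, ContDiff ℝ (⊤ : ℕ∞) f → HasCompactSupport f →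
      ∀ j, j + 2 ≤ n →
        interpNorm n f (j + 1) ^ 2 ≤ K * (interpNorm n f j * interpNorm n f (j + 2)) := by
  have step : ∀ j : ℕ, ∃ K : ℝ, 0 < K ∧ (j + 2 ≤ n → ∀ f : E3 → E3, ContDiff ℝ (⊤ : ℕ∞) f →
      HasCompactSupport f →
        interpNorm n f (j + 1) ^ 2 ≤ K * (interpNorm n f j * interpNorm n f (j + 2))) := by
    intro j
    by_cases hj : j + 2 ≤ n
    swap
    · exact ⟨1, one_pos, fun h => absurd h hj⟩
    have hjn : ((j : ℝ) + 2) ≤ n := by exact_mod_cast hj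
    have hn : (0 : ℝ) < n := by linarith [j.cast_nonneg (α := ℝ)]
    set p : ℝ := 2 * n / (j + 1) - 2 with hpdef
    have hp : 0 < p := by
      rw [hpdef, sub_pos, lt_div_iff₀ (by positivity)]; linarith
    have hp2 : p + 2 = 2 * n / (j + 1) := by rw [hpdef]; ring
    have hexp : interpExponent n (j + 1) = ENNReal.ofReal (p + 2) := by
      rw [interpExponent, ← ENNReal.ofReal_inv_of_pos (by positivity), hp2, inv_div]
      push_cast; rfl
    have htriple : HolderTriple (interpExponent n j) (interpExponent n (j + 2))
        (ENNReal.ofReal ((p + 2) / 2)) := by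
      constructor
      simp only [interpExponent, inv_inv]
      rw [← ENNReal.ofReal_add (by positivity) (by positivity),
        ← ENNReal.ofReal_inv_of_pos (by positivity), hp2]
      congr 1
      push_cast
      field_simp
      ring
    refine ⟨(Fintype.card ((Fin (j + 1 + 1) → Fin 3) × Fin 3) : ℝ) ^ 2 * (p + 1),
      mul_pos (pow_pos (Nat.cast_pos.2 Fintype.card_pos) 2) (by linarith), fun _ f hf hfc => ?_⟩
    have h := eLpNorm_iteratedFDeriv_sq_le hf hfc (j + 1) hp (q := interpExponent n j)
      (r := interpExponent n (j + 2))
    have hnonneg : ∀ i, 0 ≤ interpNorm n f i := fun i => ENNReal.toReal_nonneg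
    rw [← hexp, show j + 1 + 2 = j + 2 + 1 by ring, ← ofReal_interpNorm hf hfc,
      ← ofReal_interpNorm hf hfc, ← ofReal_interpNorm hf hfc, ← ENNReal.ofReal_pow (hnonneg _),
      ← ENNReal.ofReal_mul (hnonneg _), ← ENNReal.ofReal_mul (by positivity)] at h
    exact (ENNReal.ofReal_le_ofReal_iff (mul_nonneg (by positivity)
      (mul_nonneg (hnonneg _) (hnonneg _)))).1 h
  choose K hK hstep using step
  refine ⟨1 + ∑ j ∈ Finset.range n, K j, ?_, fun f hf hfc j hj => (hstep j hj f hf hfc).trans ?_⟩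
  · have := Finset.sum_nonneg fun j (_ : j ∈ Finset.range n) => (hK j).le
    linarith
  · refine mul_le_mul_of_nonneg_right ?_ (mul_nonneg ENNReal.toReal_nonneg ENNReal.toReal_nonneg)
    have := Finset.single_le_sum (fun j (_ : j ∈ Finset.range n) => (hK j).le)
      (Finset.mem_range.2 (show j < n by omega))
    linarith

theorem eLpNorm_iteratedFDeriv_one (f : E3 → E3) (p : ℝ≥0∞) :
    eLpNorm (iteratedFDeriv ℝ 1 f) p volume = eLpNorm (fun x => fderiv ℝ f x) p volume :=
  eLpNorm_congr_norm_ae (.of_forall fun x => by simp [norm_iteratedFDeriv_one])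

theorem eLpNorm_norm_mul_norm_le {F G : Type*} [NormedAddCommGroup F] [NormedAddCommGroup G]
    {u : E3 → F} {v : E3 → G} (hu : AEStronglyMeasurable u volume)
    (hv : AEStronglyMeasurable v volume) (p q r : ℝ≥0∞) [HolderTriple p q r] :
    eLpNorm (fun x => ‖u x‖ * ‖v x‖) r volume ≤ eLpNorm u p volume * eLpNorm v q volume := by
  simpa using eLpNorm_le_eLpNorm_mul_eLpNorm_of_nnnorm (p := p) (q := q) (r := r) hu hv
    (fun a b => ‖a‖ * ‖b‖) 1 (.of_forall fun x => by simp [nnnorm_mul])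

theorem exists_eLpNorm_norm_mul_norm_le (n : ℕ) :
    ∃ C : ℝ, 0 < C ∧ ∀ f g : E3 → E3, ContDiff ℝ (⊤ : ℕ∞) f → HasCompactSupport f →
      ContDiff ℝ (⊤ : ℕ∞) g → HasCompactSupport g → ∀ k ≤ n,
        eLpNorm (fun x => ‖iteratedFDeriv ℝ (k + 1) f x‖ * ‖iteratedFDeriv ℝ (n - k + 1) g x‖)
          2 volume ≤ ENNReal.ofReal C *
            (eLpNorm (fun x => fderiv ℝ f x) ∞ volume
               * eLpNorm (iteratedFDeriv ℝ (n + 1) g) 2 volume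
             + eLpNorm (fun x => fderiv ℝ g x) ∞ volume
               * eLpNorm (iteratedFDeriv ℝ (n + 1) f) 2 volume) := by
  rcases eq_or_ne n 0 with rfl | hn
  · refine ⟨1, one_pos, fun f g hf hfc hg hgc k hk => ?_⟩
    obtain rfl : k = 0 := by omega
    rw [ENNReal.ofReal_one, one_mul, ← eLpNorm_iteratedFDeriv_one]
    exact (eLpNorm_norm_mul_norm_le (memLp_iteratedFDeriv hf hfc _ ∞).1
      (memLp_iteratedFDeriv hg hgc _ 2).1 ∞ 2 2).trans le_self_add
  obtain ⟨K, hK, hstep⟩ := exists_interpNorm_sq_le n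
  obtain ⟨C, hC, hbound⟩ := exists_le_mul_add_of_sq_le_mul n hK
  refine ⟨C, hC, fun f g hf hfc hg hgc k hk => ?_⟩
  have hnonneg : ∀ (u : E3 → E3) i, 0 ≤ interpNorm n u i := fun u i => ENNReal.toReal_nonneg
  have hc := hbound (fun j => interpNorm n f j * interpNorm n g (n - j))
    (fun j _ => mul_nonneg (hnonneg _ _) (hnonneg _ _)) (fun j hj => ?_) k hk
  · have htriple := holderTriple_interpExponent hn hk
    refine (eLpNorm_norm_mul_norm_le (memLp_iteratedFDeriv hf hfc _ ∞).1
      (memLp_iteratedFDeriv hg hgc _ 2).1 (interpExponent n k) (interpExponent n (n - k)) 2).trans ?_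
    simp only [Nat.sub_zero, Nat.sub_self] at hc
    have h := ENNReal.ofReal_le_ofReal hc
    rw [ENNReal.ofReal_mul hC.le, ENNReal.ofReal_add (mul_nonneg (hnonneg _ _) (hnonneg _ _))
      (mul_nonneg (hnonneg _ _) (hnonneg _ _))] at h
    simp only [ENNReal.ofReal_mul (hnonneg _ _), ofReal_interpNorm hf hfc,
      ofReal_interpNorm hg hgc, interpExponent_zero, interpExponent_self hn] at h
    rwa [mul_comm (eLpNorm (fun x => fderiv ℝ g x) ∞ volume), ← eLpNorm_iteratedFDeriv_one f,
      ← eLpNorm_iteratedFDeriv_one g]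
  · obtain ⟨i, rfl⟩ := Nat.exists_eq_add_of_le hj
    have h1 := hstep f hf hfc j hj
    have h2 := hstep g hg hgc i (by omega)
    rw [show j + 2 + i - (j + 1) = i + 1 by omega, show j + 2 + i - j = i + 2 by omega,
      show j + 2 + i - (j + 2) = i by omega, mul_pow]
    calc _ ≤ _ := mul_le_mul h1 h2 (sq_nonneg _)
          (mul_nonneg hK.le (mul_nonneg (hnonneg _ _) (hnonneg _ _)))
      _ = _ := by ring

/-- Kato–Ponce commutator estimate in `L²`: for `m ≥ 1` there is
`C = C(m)` such that for all `f, g ∈ C₀^∞(ℝ³; ℝ³)`,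
`‖[∇^m, f·∇]g‖_{L²} ≤ C (‖∇f‖_{L^∞} ‖∇^m g‖_{L²} + ‖∇g‖_{L^∞} ‖∇^m f‖_{L²})`. -/
theorem kato_ponce_commutator (m : ℕ) (hm : 1 ≤ m) :
    ∃ C : ℝ, 0 < C ∧
      ∀ f g : E3 → E3,
        ContDiff ℝ (⊤ : ℕ∞) f → HasCompactSupport f →
        ContDiff ℝ (⊤ : ℕ∞) g → HasCompactSupport g →
        eLpNorm (commGrad m f g) 2 volume
          ≤ ENNReal.ofReal C *
            (eLpNorm (fun x => fderiv ℝ f x) ∞ volume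
               * eLpNorm (iteratedFDeriv ℝ m g) 2 volume
             + eLpNorm (fun x => fderiv ℝ g x) ∞ volume
               * eLpNorm (iteratedFDeriv ℝ m f) 2 volume) := by
  obtain ⟨n, rfl⟩ := Nat.exists_eq_add_of_le' hm
  obtain ⟨C, hC, hbound⟩ := exists_eLpNorm_norm_mul_norm_le n
  refine ⟨∑ k ∈ Finset.range (n + 1), ((n + 1).choose (k + 1) : ℝ) * C,
    Finset.sum_pos (fun k hk => mul_pos (Nat.cast_pos.2 (Nat.choose_pos
      (Nat.succ_le_succ (Finset.mem_range_succ_iff.1 hk)))) hC) ⟨0, by simp⟩,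
    fun f g hf hfc hg hgc => ?_⟩
  have hmeas : ∀ k l : ℕ, AEStronglyMeasurable
      (fun x => ‖iteratedFDeriv ℝ k f x‖ * ‖iteratedFDeriv ℝ l g x‖) volume := fun k l =>
    (memLp_iteratedFDeriv hf hfc k 2).1.norm.mul (memLp_iteratedFDeriv hg hgc l 2).1.norm
  calc eLpNorm (commGrad (n + 1) f g) 2 volume
      ≤ eLpNorm (∑ k ∈ Finset.range (n + 1), ((n + 1).choose (k + 1) : ℝ) • fun x =>
          ‖iteratedFDeriv ℝ (k + 1) f x‖ * ‖iteratedFDeriv ℝ (n - k + 1) g x‖) 2 volume := by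
        refine eLpNorm_mono_real fun x => (norm_commGrad_le (n + 1) hf hg x).trans_eq ?_
        simp
    _ ≤ ∑ k ∈ Finset.range (n + 1), eLpNorm (((n + 1).choose (k + 1) : ℝ) • fun x =>
          ‖iteratedFDeriv ℝ (k + 1) f x‖ * ‖iteratedFDeriv ℝ (n - k + 1) g x‖) 2 volume :=
        eLpNorm_sum_le (fun k _ => (hmeas _ _).const_smul _) one_le_two
    _ ≤ _ := by
        rw [ENNReal.ofReal_sum_of_nonneg (fun k _ => by positivity), Finset.sum_mul]
        refine Finset.sum_le_sum fun k hk => ?_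
        rw [eLpNorm_const_smul, ENNReal.ofReal_mul (by positivity), mul_assoc,
          Real.enorm_of_nonneg (by positivity)]
        gcongr
        exact hbound f g hf hfc hg hgc k (Finset.mem_range_succ_iff.1 hk)
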